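/- For every H ∈ (0,1), f(H) > 1/(5√H); consequently f(H) → ∞ as H → 0⁺. -/

import Mathlib

open MeasureTheory ProbabilityTheory Real Set Filter Topology

noncomputable section

/-- `X` is a centered Gaussian process on the time set `S`: every finite linear
combination `∑ i, c i * X (ts i)` of its values at times in `S` is a centered
Gaussian random variable. -/
def IsCenteredGaussianOn {Ω : Type} [MeasurableSpace Ω] (μ : Measure Ω)
    (X : ℝ → Ω → ℝ) (S : Set ℝ) : Prop :=
  (∀ t ∈ S, Measurable (X t)) ∧
  ∀ (k : ℕ) (c : Fin k → ℝ) (ts : Fin k → ℝ), (∀ i, ts i ∈ S) →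
    ∃ v : NNReal, μ.map (fun ω => ∑ i, c i * X (ts i) ω) = gaussianReal 0 v

/-- The `L²`-norm `‖Y‖₂ = (E Y²)^{1/2}` of a real random variable. -/
def l2norm {Ω : Type} [MeasurableSpace Ω] (μ : Measure Ω) (Y : Ω → ℝ) : ℝ :=
  Real.sqrt (∫ ω, (Y ω) ^ 2 ∂μ)

/-- The expected supremum `E [sup_{0 ≤ t ≤ 1} X_t]`. -/
def expMax {Ω : Type} [MeasurableSpace Ω] (μ : Measure Ω) (X : ℝ → Ω → ℝ) : ℝ :=
  ∫ ω, (⨆ t : Icc (0:ℝ) 1, X t.1 ω) ∂μ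

/-- The expected maximum over the grid: `E [max_{0 ≤ i ≤ n} X_{i/n}]`. -/
def expMaxGrid {Ω : Type} [MeasurableSpace Ω] (μ : Measure Ω) (X : ℝ → Ω → ℝ) (n : ℕ) : ℝ :=
  ∫ ω, (⨆ i : Fin (n + 1), X (((i : ℕ) : ℝ) / (n : ℝ)) ω) ∂μ

/-- `B` is a fractional Brownian motion with Hurst parameter `H`: a centered Gaussian
process on `[0,∞)` with a.s. continuous sample paths, `B 0 = 0`, and covariance
`E[B_s B_t] = (s^{2H} + t^{2H} - |t-s|^{2H}) / 2`. -/
def IsFBM {Ω : Type} [MeasurableSpace Ω] (μ : Measure Ω) (H : ℝ) (B : ℝ → Ω → ℝ) : Prop :=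
  IsCenteredGaussianOn μ B (Ici 0) ∧
  (∀ᵐ ω ∂μ, ContinuousOn (fun t => B t ω) (Ici 0)) ∧
  (∀ᵐ ω ∂μ, B 0 ω = 0) ∧
  ∀ s t : ℝ, 0 ≤ s → 0 ≤ t →
    ∫ ω, B s ω * B t ω ∂μ = (s ^ (2 * H) + t ^ (2 * H) - |t - s| ^ (2 * H)) / 2

/-! Concavity of `x ↦ x ^ (2H)` for `2H ≤ 1` makes the kernel `|i - j| ^ (2H)` on the integers
conditionally negative semidefinite, even with the gap `2 - 2 ^ (2H)` to spare. Every contrast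
of the values of the fractional Brownian motion on the grid `i / n` therefore has at least the
variance of the same contrast of independent centered Gaussians of variance
`σ² = (2 - 2 ^ (2H)) / (2 n ^ (2H))`, and Gaussian comparison bounds the expected maximum below by
`σ` times that of `n + 1` independent standard Gaussians, which is of order `√(log n)`. The choice
`n = ⌊exp (1 / H)⌋` keeps `n ^ (2H) ≤ e²` while `log n ≈ 1 / H`; the resulting constant suffices
for `H ≤ 1 / 7`. For `H ≥ 1 / 7` the three times `0`, `1 / 2`, `1` suffice, because
`max + max (-·)` of three numbers is half the sum of their distances. Fernique's theorem makes the
supremum over `[0, 1]` integrable, so that its expectation dominates that over finitely many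
times. -/

theorem abs_ciSup_le {ι : Type*} [Nonempty ι] {x : ι → ℝ} {M : ℝ} (hx : ∀ i, |x i| ≤ M) :
    |⨆ i, x i| ≤ M := by
  refine abs_le.2 ⟨?_, ciSup_le fun i => (abs_le.1 (hx i)).2⟩
  obtain ⟨i⟩ := ‹Nonempty ι›
  exact (abs_le.1 (hx i)).1.trans (le_ciSup ⟨M, forall_mem_range.2 fun j => (abs_le.1 (hx j)).2⟩ i)

section FiniteSupremum

variable {Ω ι : Type*} [MeasurableSpace Ω] {μ : Measure Ω} [Finite ι] [Nonempty ι]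

theorem iSup_add_const_of_finite (x : ι → ℝ) (c : ℝ) : ⨆ i, (x i + c) = (⨆ i, x i) + c :=
  ((OrderIso.addRight c).map_ciSup (Finite.bddAbove_range x)).symm

theorem integrable_iSup_of_finite {f : ι → Ω → ℝ} (hf : ∀ i, Integrable (f i) μ) :
    Integrable (fun ω => ⨆ i, f i ω) μ := by
  have := Fintype.ofFinite ι
  refine (integrable_finsetSum Finset.univ fun i _ => (hf i).abs).mono'
    (AEMeasurable.iSup fun i => (hf i).aemeasurable).aestronglyMeasurable
    (ae_of_all _ fun ω => abs_ciSup_le fun i => ?_)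
  exact Finset.single_le_sum (f := fun j => |f j ω|) (fun j _ => abs_nonneg _) (Finset.mem_univ i)

theorem integral_iSup_sub_of_finite [IsProbabilityMeasure μ] {f : ι → Ω → ℝ} {g : Ω → ℝ}
    (hf : ∀ i, Integrable (f i) μ) (hg : Integrable g μ) :
    ∫ ω, (⨆ i, (f i ω - g ω)) ∂μ = ∫ ω, (⨆ i, f i ω) ∂μ - μ[g] := by
  simp_rw [sub_eq_add_neg, iSup_add_const_of_finite, ← sub_eq_add_neg]
  exact integral_sub (integrable_iSup_of_finite hf) hg

theorem integral_iSup_le_integral_iSup_add {Ω' : Type*} [MeasurableSpace Ω'] {ν : Measure Ω'}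
    [IsProbabilityMeasure μ] [IsProbabilityMeasure ν] {Y : ι → Ω → ℝ} {Z : ι → Ω' → ℝ}
    (hY : ∀ i, Integrable (Y i) μ) (hZ : ∀ i, Integrable (Z i) ν) (hZ0 : ∀ i, ν[Z i] = 0) :
    ∫ ω, (⨆ i, Y i ω) ∂μ ≤ ∫ p, (⨆ i, (Z i p.1 + Y i p.2)) ∂(ν.prod μ) := by
  have hint : Integrable (fun p : Ω' × Ω => ⨆ i, (Z i p.1 + Y i p.2)) (ν.prod μ) :=
    integrable_iSup_of_finite fun i => ((hZ i).comp_fst μ).add ((hY i).comp_snd ν)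
  rw [integral_prod_symm _ hint]
  refine integral_mono (integrable_iSup_of_finite hY) hint.integral_prod_right fun ω => ?_
  have hZY : ∀ i, Integrable (fun ω' => Z i ω' + Y i ω) ν := fun i =>
    (hZ i).add (integrable_const _)
  refine ciSup_le fun i => ?_
  calc Y i ω = ∫ ω', (Z i ω' + Y i ω) ∂ν := by
        rw [integral_add (hZ i) (integrable_const _), hZ0]; simp
    _ ≤ ∫ ω', (⨆ j, (Z j ω' + Y j ω)) ∂ν :=
        integral_mono (hZY i) (integrable_iSup_of_finite hZY) fun ω' =>
          le_ciSup (Finite.bddAbove_range fun j => Z j ω' + Y j ω) i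

end FiniteSupremum

section GaussianComparison

variable {Ω Ω' ι : Type*} [MeasurableSpace Ω] [MeasurableSpace Ω'] {μ : Measure Ω}
  {ν : Measure Ω'} [Fintype ι] {X : ι → Ω → ℝ} {Y : ι → Ω' → ℝ}

theorem variance_sum_const_mul [IsFiniteMeasure μ] (hX : ∀ i, MemLp (X i) 2 μ) (c : ι → ℝ) :
    Var[fun ω => ∑ i, c i * X i ω; μ] = ∑ i, ∑ j, c i * c j * cov[X i, X j; μ] := by
  rw [variance_fun_sum fun i => (hX i).const_mul (c i)]
  simp_rw [covariance_const_mul_left, covariance_const_mul_right, mul_assoc]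

theorem exists_forall_apply_eq_sum_mul (L : StrongDual ℝ (ι → ℝ)) :
    ∃ c : ι → ℝ, ∀ x, L x = ∑ i, c i * x i := by
  classical
  exact ⟨fun i => L fun j => if i = j then 1 else 0, fun x => by
    simpa [mul_comm] using L.toLinearMap.pi_apply_eq_sum_univ x⟩

theorem map_eq_map_of_variance_eq (hX : HasGaussianLaw (fun ω => (X · ω)) μ)
    (hY : HasGaussianLaw (fun ω => (Y · ω)) ν) (hmean : ∀ i, ν[Y i] = μ[X i])
    (hvar : ∀ c : ι → ℝ, Var[fun ω => ∑ i, c i * Y i ω; ν] = Var[fun ω => ∑ i, c i * X i ω; μ]) :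
    ν.map (fun ω => (Y · ω)) = μ.map (fun ω => (X · ω)) := by
  have := hX.isProbabilityMeasure
  have := hY.isProbabilityMeasure
  have := hX.isGaussian_map
  have := hY.isGaussian_map
  refine Measure.ext_of_charFunDual (funext fun L => ?_)
  obtain ⟨c, hc⟩ := exists_forall_apply_eq_sum_mul L
  rw [hX.charFunDual_map_eq_fun, hY.charFunDual_map_eq_fun]
  simp_rw [hc, hvar]
  rw [integral_finsetSum _ fun i _ => (hX.eval i).integrable.const_mul _,
    integral_finsetSum _ fun i _ => (hY.eval i).integrable.const_mul _]
  simp_rw [integral_const_mul, hmean]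

theorem integral_iSup_eq_of_variance_eq (hX : HasGaussianLaw (fun ω => (X · ω)) μ)
    (hY : HasGaussianLaw (fun ω => (Y · ω)) ν) (hmean : ∀ i, ν[Y i] = μ[X i])
    (hvar : ∀ c : ι → ℝ, Var[fun ω => ∑ i, c i * Y i ω; ν] = Var[fun ω => ∑ i, c i * X i ω; μ]) :
    ∫ ω, (⨆ i, Y i ω) ∂ν = ∫ ω, (⨆ i, X i ω) ∂μ := by
  have hm : Measurable fun x : ι → ℝ => ⨆ i, x i := Measurable.iSup measurable_pi_apply
  rw [← integral_map hX.aemeasurable hm.aestronglyMeasurable,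
    ← integral_map hY.aemeasurable hm.aestronglyMeasurable,
    map_eq_map_of_variance_eq hX hY hmean hvar]

theorem integral_iSup_neg_of_hasGaussianLaw {ι : Type*} [Finite ι] {X : ι → Ω → ℝ}
    (hX : HasGaussianLaw (fun ω => (X · ω)) μ) (hX0 : ∀ i, μ[X i] = 0) :
    ∫ ω, (⨆ i, -X i ω) ∂μ = ∫ ω, (⨆ i, X i ω) ∂μ := by
  have := Fintype.ofFinite ι
  refine integral_iSup_eq_of_variance_eq hX (hX.fun_neg) (fun i => ?_) fun c => ?_
  · rw [integral_neg, hX0, neg_zero]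
  · simp_rw [mul_neg, Finset.sum_neg_distrib]
    exact variance_fun_neg

theorem hasGaussianLaw_add_prod {E : Type*} [NormedAddCommGroup E] [NormedSpace ℝ E]
    [CompleteSpace E] [SecondCountableTopology E] [MeasurableSpace E] [BorelSpace E]
    {U : Ω → E} {V : Ω' → E} (hU : HasGaussianLaw U μ) (hV : HasGaussianLaw V ν) :
    HasGaussianLaw (fun p : Ω × Ω' => U p.1 + V p.2) (μ.prod ν) := by
  have := hU.isProbabilityMeasure
  have := hV.isProbabilityMeasure
  have := hU.isGaussian_map
  have := hV.isGaussian_map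
  have hU_law : HasLaw U (μ.map U) μ := ⟨hU.aemeasurable, rfl⟩
  have hV_law : HasLaw V (ν.map V) ν := ⟨hV.aemeasurable, rfl⟩
  exact ((indepFun_prod₀ hU.aemeasurable hV.aemeasurable).hasGaussianLaw
    (hU_law.comp measurePreserving_fst.hasLaw).hasGaussianLaw
    (hV_law.comp measurePreserving_snd.hasLaw).hasGaussianLaw).fun_add

theorem exists_isGaussian_of_posSemidef {S : Matrix ι ι ℝ} (hS : S.PosSemidef) :
    ∃ γ : Measure (ι → ℝ), IsGaussian γ ∧ (∀ i, ∫ x, x i ∂γ = 0) ∧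
      ∀ c : ι → ℝ, Var[fun x : ι → ℝ => ∑ i, c i * x i; γ] = ∑ i, ∑ j, c i * c j * S i j := by
  classical
  let T := PiLp.continuousLinearEquiv 2 ℝ fun _ : ι => ℝ
  have hZ : HasGaussianLaw T (multivariateGaussian 0 S) := IsGaussian.hasGaussianLaw_id.map_equiv T
  have hγ := hZ.isGaussian_map
  refine ⟨_, hγ, fun i => ?_, fun c => ?_⟩
  · rw [integral_map hZ.aemeasurable (measurable_pi_apply i).aestronglyMeasurable]
    simpa [T] using (EuclideanSpace.proj (𝕜 := ℝ) i).integral_comp_id_comm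
      (μ := multivariateGaussian 0 S) IsGaussian.integrable_id
  · rw [variance_map (Measurable.aemeasurable (by fun_prop)) hZ.aemeasurable]
    refine (variance_sum_const_mul (fun i => (hZ.eval i).memLp_two) c).trans ?_
    simp_rw [← covariance_eval_multivariateGaussian (μ := 0) hS]
    rfl

variable [Nonempty ι]

theorem integral_iSup_le_of_variance_le (hX : HasGaussianLaw (fun ω => (X · ω)) μ)
    (hY : HasGaussianLaw (fun ω => (Y · ω)) ν) (hmean : ∀ i, ν[Y i] = μ[X i])
    (hvar : ∀ c : ι → ℝ, Var[fun ω => ∑ i, c i * Y i ω; ν] ≤ Var[fun ω => ∑ i, c i * X i ω; μ]) :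
    ∫ ω, (⨆ i, Y i ω) ∂ν ≤ ∫ ω, (⨆ i, X i ω) ∂μ := by
  classical
  have := hX.isProbabilityMeasure
  have := hY.isProbabilityMeasure
  let S : Matrix ι ι ℝ := .of fun i j => cov[X i, X j; μ] - cov[Y i, Y j; ν]
  have hS_sum : ∀ c : ι → ℝ, ∑ i, ∑ j, c i * c j * S i j =
      Var[fun ω => ∑ i, c i * X i ω; μ] - Var[fun ω => ∑ i, c i * Y i ω; ν] := fun c => by
    rw [variance_sum_const_mul (fun i => (hX.eval i).memLp_two),
      variance_sum_const_mul (fun i => (hY.eval i).memLp_two)]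
    simp only [S, Matrix.of_apply, mul_sub, Finset.sum_sub_distrib]
  have hS : S.PosSemidef := by
    refine .of_dotProduct_mulVec_nonneg ?_ fun c => ?_
    · ext i j
      simp [S, covariance_comm (X i), covariance_comm (Y i)]
    · have h := sub_nonneg.2 (hvar c)
      rw [← hS_sum] at h
      simpa [dotProduct, Matrix.mulVec, Finset.mul_sum, mul_assoc, mul_comm (c _) (S _ _)] using h
  obtain ⟨γ, hγ, hγ_mean, hγ_var⟩ := exists_isGaussian_of_posSemidef hS
  have hZ : HasGaussianLaw (fun z : ι → ℝ => (z ·)) γ := IsGaussian.hasGaussianLaw_id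
  calc ∫ ω, (⨆ i, Y i ω) ∂ν ≤ ∫ p, (⨆ i, (p.1 i + Y i p.2)) ∂(γ.prod ν) :=
        integral_iSup_le_integral_iSup_add (fun i => (hY.eval i).integrable)
          (fun i => (hZ.eval i).integrable) hγ_mean
    _ = ∫ ω, (⨆ i, X i ω) ∂μ := by
        refine integral_iSup_eq_of_variance_eq hX (hasGaussianLaw_add_prod hZ hY)
          (fun i => ?_) fun c => ?_
        · rw [integral_add ((hZ.eval i).integrable.comp_fst _) ((hY.eval i).integrable.comp_snd _),
            integral_fun_fst (fun z : ι → ℝ => z i), integral_fun_snd (Y i)]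
          simp [hγ_mean, hmean]
        · simp_rw [mul_add, Finset.sum_add_distrib]
          rw [variance_add_prod (memLp_finsetSum _ fun i _ => (hZ.eval i).memLp_two.const_mul _)
            (memLp_finsetSum _ fun i _ => (hY.eval i).memLp_two.const_mul _), hγ_var, hS_sum]
          ring

/-- Sudakov–Fernique only compares the increments `Xᵢ - Xⱼ`. Comparing all contrasts makes the
difference of the two covariances of the increments `Xᵢ - Xᵢ₀` positive semidefinite, so that
independent noise turns one vector of increments into the other. -/
theorem integral_iSup_le_of_variance_contrast_le (hX : HasGaussianLaw (fun ω => (X · ω)) μ)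
    (hY : HasGaussianLaw (fun ω => (Y · ω)) ν) (hmean : ∀ i, ν[Y i] = μ[X i])
    (hvar : ∀ c : ι → ℝ, ∑ i, c i = 0 →
      Var[fun ω => ∑ i, c i * Y i ω; ν] ≤ Var[fun ω => ∑ i, c i * X i ω; μ]) :
    ∫ ω, (⨆ i, Y i ω) ∂ν ≤ ∫ ω, (⨆ i, X i ω) ∂μ := by
  classical
  have := hX.isProbabilityMeasure
  have := hY.isProbabilityMeasure
  obtain ⟨i₀⟩ := ‹Nonempty ι›
  let A : (ι → ℝ) →L[ℝ] (ι → ℝ) := .pi fun i => .proj i - .proj i₀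
  have h : ∫ ω, (⨆ i, (Y i ω - Y i₀ ω)) ∂ν ≤ ∫ ω, (⨆ i, (X i ω - X i₀ ω)) ∂μ := by
    refine integral_iSup_le_of_variance_le (hX.map_fun A) (hY.map_fun A) (fun i => ?_) fun c => ?_
    · change ∫ ω, (Y i ω - Y i₀ ω) ∂ν = ∫ ω, (X i ω - X i₀ ω) ∂μ
      rw [integral_sub (hX.eval i).integrable (hX.eval i₀).integrable,
        integral_sub (hY.eval i).integrable (hY.eval i₀).integrable, hmean, hmean]
    · have hc : ∑ i, (c i - if i = i₀ then ∑ j, c j else 0) = 0 := by simp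
      have hsum : ∀ x : ι → ℝ, ∑ i, c i * (x i - x i₀) =
          ∑ i, (c i - if i = i₀ then ∑ j, c j else 0) * x i := fun x => by
        simp [mul_sub, sub_mul, Finset.sum_sub_distrib, Finset.sum_mul]
      simpa only [A, hsum] using hvar _ hc
  rwa [integral_iSup_sub_of_finite (fun i => (hX.eval i).integrable) (hX.eval i₀).integrable,
    integral_iSup_sub_of_finite (fun i => (hY.eval i).integrable) (hY.eval i₀).integrable, hmean,
    sub_le_sub_iff_right] at h

end GaussianComparison

section IndependentMaximum

/-- One of the `n + 1` coordinates is replaced by its mean `0`, which by Jensen only lowers the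
expected maximum and makes the maximum nonnegative when no other coordinate exceeds `t`. -/
theorem mul_one_sub_pow_le_integral_iSup_pi {ν : Measure ℝ} [IsProbabilityMeasure ν]
    (hν : Integrable id ν) (hν0 : ν[id] = 0) (n : ℕ) (t : ℝ) :
    t * (1 - ν.real (Iic t) ^ n) ≤ ∫ x, (⨆ i, x i) ∂(Measure.pi fun _ : Fin (n + 1) => ν) := by
  let π' : Measure (Fin n → ℝ) := Measure.pi fun _ => ν
  let Y : Fin (n + 1) → (Fin n → ℝ) → ℝ := Fin.cons 0 fun i x => x i
  let Z : Fin (n + 1) → ℝ → ℝ := Fin.cons id fun _ => 0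
  have hY : ∀ i, Integrable (Y i) π' :=
    Fin.cases (integrable_zero _ _ _) fun i => integrable_eval hν
  have hZ : ∀ i, Integrable (Z i) ν := Fin.cases hν fun _ => integrable_zero _ _ _
  have hZ0 : ∀ i, ν[Z i] = 0 := Fin.cases hν0 fun _ => by simp [Z]
  let A : Set (Fin n → ℝ) := (univ.pi fun _ => Iic t)ᶜ
  have hA : MeasurableSet A := (MeasurableSet.univ_pi fun _ => measurableSet_Iic).compl
  have hA_le : ∀ x, A.indicator (fun _ => t) x ≤ ⨆ i, Y i x := fun x => by
    have hle := le_ciSup (Finite.bddAbove_range fun i => Y i x)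
    refine indicator_apply_le' (fun hx => ?_) fun _ => hle 0
    obtain ⟨i, hi⟩ : ∃ i, t < x i := by simpa [A, -Set.pi_univ_Iic] using hx
    exact hi.le.trans (hle i.succ)
  calc t * (1 - ν.real (Iic t) ^ n) = ∫ x, A.indicator (fun _ => t) x ∂π' := by
        rw [integral_indicator_const _ hA,
          measureReal_compl (MeasurableSet.univ_pi fun _ => measurableSet_Iic)]
        simp [π', measureReal_def, -Set.pi_univ_Iic, mul_comm]
    _ ≤ ∫ x, (⨆ i, Y i x) ∂π' :=
        integral_mono ((integrable_const t).indicator hA) (integrable_iSup_of_finite hY) hA_le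
    _ ≤ ∫ p, (⨆ i, (Z i p.1 + Y i p.2)) ∂(ν.prod π') :=
        integral_iSup_le_integral_iSup_add hY hZ hZ0
    _ = ∫ x, (⨆ i, x i) ∂(Measure.pi fun _ : Fin (n + 1) => ν) := by
        rw [← (measurePreserving_piFinSuccAbove (fun _ => ν) 0).integral_comp
          (MeasurableEquiv.measurableEmbedding _)]
        refine integral_congr_ae (ae_of_all _ fun x => iSup_congr ?_)
        refine Fin.cases ?_ fun i => ?_ <;> simp [Z, Y, Fin.tail]

theorem integral_gaussianPDFReal_Ioi_eq (t : ℝ) :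
    ∫ x in Ioi 0, gaussianPDFReal (-t) 1 x = (gaussianReal 0 1).real (Ioi t) := by
  have hmeas : Measurable fun x : ℝ => x - t := measurable_id.sub_const t
  have hmap : (gaussianReal 0 1).map (· - t) = gaussianReal (-t) 1 := by
    rw [gaussianReal_map_sub_const, zero_sub]
  rw [show Ioi t = (· - t) ⁻¹' Ioi 0 by simp,
    ← map_measureReal_apply hmeas measurableSet_Ioi, hmap, measureReal_def,
    gaussianReal_apply_eq_integral _ one_ne_zero,
    ENNReal.toReal_ofReal (integral_nonneg fun x => gaussianPDFReal_nonneg _ _ x)]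

theorem mul_exp_le_gaussianReal_Ioi {a : ℝ} (ha : 1 < a) (t : ℝ) :
    √(1 - a⁻¹) / 2 * rexp (-(a * t ^ 2 / 2)) ≤ (gaussianReal 0 1).real (Ioi t) := by
  have ha' : 0 < a - 1 := sub_pos.2 ha
  set b := a / (a - 1)
  have hb : 0 < b / 2 := by positivity
  have hsq : ∀ x, (x + t) ^ 2 ≤ a * t ^ 2 + b * x ^ 2 := fun x => by
    have : a * t ^ 2 + b * x ^ 2 - (x + t) ^ 2 = ((a - 1) * t - x) ^ 2 / (a - 1) := by
      simp only [b]; field_simp; ring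
    exact sub_nonneg.1 (this ▸ by positivity)
  have hgauss : ∫ x in Ioi 0, rexp (-(b / 2) * x ^ 2) = √(2 * π) * (√(1 - a⁻¹) / 2) := by
    rw [integral_gaussian_Ioi, ← mul_div_assoc, ← Real.sqrt_mul (by positivity)]
    congr 2
    simp only [b]; field_simp
  rw [← integral_gaussianPDFReal_Ioi_eq]
  calc √(1 - a⁻¹) / 2 * rexp (-(a * t ^ 2 / 2))
      = ∫ x in Ioi 0, (√(2 * π))⁻¹ * rexp (-(a * t ^ 2 / 2)) * rexp (-(b / 2) * x ^ 2) := by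
        rw [integral_const_mul, hgauss]
        field_simp
    _ ≤ ∫ x in Ioi 0, gaussianPDFReal (-t) 1 x := by
        refine setIntegral_mono ((integrable_exp_neg_mul_sq hb).const_mul _).integrableOn
          (integrable_gaussianPDFReal _ _).integrableOn fun x => ?_
        simp only [gaussianPDFReal, NNReal.coe_one, mul_one, mul_assoc, ← Real.exp_add,
          sub_neg_eq_add]
        gcongr
        linarith [hsq x]

theorem mul_one_sub_exp_le_integral_iSup_pi_gaussianReal (n : ℕ) {a t : ℝ} (ha : 1 < a)
    (ht : 0 ≤ t) :
    t * (1 - rexp (-(n * (√(1 - a⁻¹) / 2 * rexp (-(a * t ^ 2 / 2)))))) ≤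
      ∫ x, (⨆ i, x i) ∂(Measure.pi fun _ : Fin (n + 1) => gaussianReal 0 1) := by
  refine (mul_le_mul_of_nonneg_left (sub_le_sub_left ?_ _) ht).trans
    (mul_one_sub_pow_le_integral_iSup_pi IsGaussian.integrable_id integral_id_gaussianReal n t)
  set p := √(1 - a⁻¹) / 2 * rexp (-(a * t ^ 2 / 2))
  have hp : (gaussianReal 0 1).real (Iic t) ≤ 1 - p := by
    rw [← compl_Ioi, measureReal_compl measurableSet_Ioi, probReal_univ]
    exact sub_le_sub_left (mul_exp_le_gaussianReal_Ioi ha t) _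
  calc (gaussianReal 0 1).real (Iic t) ^ n ≤ rexp (-p) ^ n := by
        gcongr
        exact hp.trans (one_sub_le_exp_neg p)
    _ = rexp (-(n * p)) := by rw [← Real.exp_nat_mul, mul_neg]

end IndependentMaximum

section StandardGaussian

variable {Ω ι : Type*} [MeasurableSpace Ω] {μ : Measure Ω} [Fintype ι]

theorem hasGaussianLaw_pi_gaussianReal :
    HasGaussianLaw (fun x : ι → ℝ => (x ·)) (Measure.pi fun _ => gaussianReal 0 1) :=
  iIndepFun.hasGaussianLaw
    (fun i => (measurePreserving_eval (fun _ => gaussianReal 0 1) i).hasLaw.hasGaussianLaw)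
    (iIndepFun_pi (X := fun _ => id) fun _ => aemeasurable_id)

theorem variance_sum_const_mul_pi_gaussianReal (c : ι → ℝ) :
    Var[fun x : ι → ℝ => ∑ i, c i * x i; Measure.pi fun _ => gaussianReal 0 1] = ∑ i, c i ^ 2 := by
  have hc : ∀ i, Var[fun x => c i * x; gaussianReal 0 1] = c i ^ 2 := fun i => by
    rw [variance_const_mul (c i) fun x => x, variance_fun_id_gaussianReal, NNReal.coe_one, mul_one]
  have h := variance_sum_pi (μ := fun _ : ι => gaussianReal 0 1) (X := fun i x => c i * x)
    fun i => (memLp_id_gaussianReal 2).const_mul (c i)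
  simpa only [hc, Finset.sum_fn] using h

theorem mul_integral_iSup_pi_gaussianReal_le [Nonempty ι] {X : ι → Ω → ℝ}
    (hX : HasGaussianLaw (fun ω => (X · ω)) μ) (hX0 : ∀ i, μ[X i] = 0) {σ : ℝ} (hσ : 0 ≤ σ)
    (hvar : ∀ c : ι → ℝ, ∑ i, c i = 0 →
      σ ^ 2 * ∑ i, c i ^ 2 ≤ Var[fun ω => ∑ i, c i * X i ω; μ]) :
    σ * ∫ x, (⨆ i, x i) ∂(Measure.pi fun _ : ι => gaussianReal 0 1) ≤ ∫ ω, (⨆ i, X i ω) ∂μ := by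
  simp_rw [← integral_const_mul, Real.mul_iSup_of_nonneg hσ]
  have hZ := hasGaussianLaw_pi_gaussianReal (ι := ι)
  refine integral_iSup_le_of_variance_contrast_le hX (hZ.map_fun (σ • .id ℝ _))
    (fun i => ?_) fun c hc => ?_
  · rw [integral_const_mul, integral_eval, integral_id_gaussianReal]
    simp [hX0]
  · change Var[fun x : ι → ℝ => ∑ i, c i * (σ * x i); _] ≤ _
    simp_rw [mul_left_comm _ σ, ← Finset.mul_sum]
    rw [variance_const_mul, variance_sum_const_mul_pi_gaussianReal]
    exact hvar c hc

end StandardGaussian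

section NegativeType

variable {ι : Type*} [Fintype ι]

/-- Conditionally negative semidefinite kernels: the quadratic form of `K` is nonpositive on the
vectors whose coordinates sum to zero. Symmetry of `K` is not required. -/
def IsCondNegSemidef (K : ι → ι → ℝ) : Prop :=
  ∀ c : ι → ℝ, ∑ i, c i = 0 → ∑ i, ∑ j, c i * c j * K i j ≤ 0

namespace IsCondNegSemidef

variable {K L : ι → ι → ℝ}

theorem const (a : ℝ) : IsCondNegSemidef fun _ _ : ι => a := fun c hc => by
  simp_rw [← Finset.sum_mul, ← Finset.mul_sum, hc]
  simp

theorem add (hK : IsCondNegSemidef K) (hL : IsCondNegSemidef L) :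
    IsCondNegSemidef fun i j => K i j + L i j := fun c hc => by
  simp_rw [mul_add, Finset.sum_add_distrib]
  exact add_nonpos (hK c hc) (hL c hc)

theorem const_mul (hK : IsCondNegSemidef K) {a : ℝ} (ha : 0 ≤ a) :
    IsCondNegSemidef fun i j => a * K i j := fun c hc => by
  simp_rw [mul_left_comm _ a, ← Finset.mul_sum]
  exact mul_nonpos_of_nonneg_of_nonpos ha (hK c hc)

theorem sum {κ : Type*} (s : Finset κ) {K : κ → ι → ι → ℝ} (hK : ∀ k ∈ s, IsCondNegSemidef (K k)) :
    IsCondNegSemidef fun i j => ∑ k ∈ s, K k i j := fun c hc => by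
  simp_rw [Finset.mul_sum, Finset.sum_comm (t := s)]
  exact Finset.sum_nonpos fun k hk => hK k hk c hc

end IsCondNegSemidef

theorem volume_real_Icc_inter_Icc_add (x y m : ℝ) :
    volume.real (Icc x (x + m) ∩ Icc y (y + m)) = m - min |x - y| m := by
  rw [Icc_inter_Icc, Real.volume_real_Icc, ← max_sub_min_eq_abs]
  grind

theorem isCondNegSemidef_min_abs_sub (x : ι → ℝ) (m : ℝ) :
    IsCondNegSemidef fun i j => min |x i - x j| m := fun c hc => by
  have hpsd : 0 ≤ ∑ i, ∑ j, c i * c j * (m - min |x i - x j| m) := by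
    have h := (posSemidef_matrix_measure_inter (μ := volume) (s := fun i => Icc (x i) (x i + m))
      (fun i => measurableSet_Icc) fun i => measure_Icc_lt_top.ne).dotProduct_mulVec_nonneg c
    simpa [volume_real_Icc_inter_Icc_add, dotProduct, Matrix.mulVec, Finset.mul_sum, mul_assoc,
      mul_left_comm, mul_comm] using h
  have hm := IsCondNegSemidef.const m c hc
  simp_rw [mul_sub, Finset.sum_sub_distrib] at hpsd
  linarith

theorem eq_add_mul_add_sum_mul_min (G : ℕ → ℝ) {d N : ℕ} (hd : d ≤ N) :
    G d = G 0 + (G (N + 1) - G N) * d +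
      ∑ m ∈ Finset.range N, (G (m + 1) - G m - (G (m + 2) - G (m + 1))) * min (d : ℝ) (m + 1) := by
  have hcount : ∀ m, ∑ k ∈ Finset.range m, (if k < d then (1 : ℝ) else 0) = min (d : ℝ) m := by
    intro m
    rw [Finset.sum_boole, ← Nat.cast_min]
    congr
    rw [← Finset.card_range (min d m)]
    congr 1
    ext k
    simp only [Finset.mem_filter, Finset.mem_range]
    omega
  have htel : ∑ k ∈ Finset.range (N + 1), (G (k + 1) - G k) * (if k < d then 1 else 0) =
      G d - G 0 := by
    rw [← Finset.sum_range_sub]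
    simp_rw [mul_ite, mul_one, mul_zero, ← Finset.sum_filter]
    congr 1
    ext k
    simp only [Finset.mem_filter, Finset.mem_range]
    omega
  have h := Finset.sum_range_by_parts (fun k => G (k + 1) - G k)
    (fun k => if k < d then (1 : ℝ) else 0) (N + 1)
  simp only [smul_eq_mul, htel, hcount, Nat.add_sub_cancel] at h
  rw [min_eq_left (by exact_mod_cast hd.trans N.le_succ)] at h
  rw [sub_eq_iff_eq_add'.1 h, add_assoc, sub_eq_add_neg, ← Finset.sum_neg_distrib]
  simp_rw [← neg_mul, neg_sub, Nat.cast_succ]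

theorem isCondNegSemidef_natAbs_sub_of_concave (f : ι → ℤ) {G : ℕ → ℝ} (hmono : Monotone G)
    (hconc : Antitone fun k => G (k + 1) - G k) :
    IsCondNegSemidef fun i j => G (f i - f j).natAbs := by
  obtain ⟨N, hN⟩ : ∃ N, ∀ i j, (f i - f j).natAbs ≤ N := by
    obtain ⟨N, hN⟩ := Finite.bddAbove_range fun p : ι × ι => (f p.1 - f p.2).natAbs
    exact ⟨N, fun i j => hN ⟨(i, j), rfl⟩⟩
  have hmin := isCondNegSemidef_min_abs_sub fun i => (f i : ℝ)
  have hcast : ∀ i j, ((f i - f j).natAbs : ℝ) = |(f i : ℝ) - f j| := fun i j => by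
    rw [Nat.cast_natAbs, Int.cast_abs, Int.cast_sub]
  simp_rw [fun i j => eq_add_mul_add_sum_mul_min G (hN i j), hcast]
  refine ((IsCondNegSemidef.const _).add (.const_mul ?_ (sub_nonneg.2 (hmono N.le_succ)))).add
    (.sum _ fun m _ => (hmin (m + 1)).const_mul (sub_nonneg.2 (hconc m.le_succ)))
  convert hmin N using 3 with i j
  rw [← hcast, min_eq_left (Nat.cast_le.2 (hN i j))]

theorem sum_sum_mul_rpow_abs_sub_le {f : ι → ℤ} (hf : f.Injective) {a : ℝ} (ha0 : 0 < a)
    (ha1 : a ≤ 1) {c : ι → ℝ} (hc : ∑ i, c i = 0) :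
    ∑ i, ∑ j, c i * c j * |(f i : ℝ) - f j| ^ a ≤ -((2 - 2 ^ a) * ∑ i, c i ^ 2) := by
  classical
  -- `2 - 2 ^ a` is the largest amount by which the values at `k ≥ 1` can be lowered without
  -- destroying concavity at `k = 1`; it becomes a multiple of the identity in the kernel.
  let G : ℕ → ℝ := fun k => if k = 0 then 0 else (k : ℝ) ^ a - (2 - 2 ^ a)
  have h2 : (1 : ℝ) ≤ 2 ^ a := Real.one_le_rpow one_le_two ha0.le
  have hmono : Monotone G := monotone_nat_of_le_succ fun k => by
    rcases k with _ | k
    · simp only [G, zero_add, one_ne_zero, if_true, if_false, Nat.cast_one, one_rpow]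
      linarith
    · simp only [G, Nat.add_eq_zero_iff, one_ne_zero, and_false, if_false]
      gcongr
      simp
  have hconc : Antitone fun k => G (k + 1) - G k := antitone_nat_of_succ_le fun k => by
    rcases k with _ | k
    · have h : (2 : ℝ) ^ a - 1 ≤ 1 - (2 - 2 ^ a) := by linarith
      simpa [G, one_add_one_eq_two] using h
    · have h := (Real.concaveOn_rpow ha0.le ha1).slope_anti_adjacent
        (show (k : ℝ) + 1 ∈ Ici 0 from mem_Ici.2 (by positivity))
        (show (k : ℝ) + 1 + 1 + 1 ∈ Ici 0 from mem_Ici.2 (by positivity)) (lt_add_one _)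
        (lt_add_one _)
      simpa [G] using h
  have hG : ∀ i j, G (f i - f j).natAbs + (2 - 2 ^ a) =
      |(f i : ℝ) - f j| ^ a + if i = j then 2 - 2 ^ a else 0 := fun i j => by
    rcases eq_or_ne i j with rfl | hij
    · simp [G, ha0.ne']
    · simp [G, hij, sub_eq_zero, hf.ne hij]
  have h := ((isCondNegSemidef_natAbs_sub_of_concave f hmono hconc).add (.const (2 - 2 ^ a))) c hc
  simp_rw [hG, mul_add, Finset.sum_add_distrib, mul_ite, mul_zero, Finset.sum_ite_eq,
    Finset.mem_univ, if_true, ← Finset.sum_mul, ← sq] at h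
  linarith

end NegativeType

section GaussianSupremum

open scoped ENNReal

/-- The constant by which a radius `a` is multiplied to bound the first moment of the norm of a
centered Gaussian vector whose norm is at most `a` with probability at least `c`. It is the
right-hand side of Fernique's exponential estimate, rescaled by the square root of its rate. -/
def ferniqueConst (c : ℝ≥0∞) : ℝ≥0∞ :=
  .ofReal (√(Fernique.logRatio c))⁻¹ * (.ofReal (rexp (Fernique.logRatio c)) +
    ∑' n : ℕ, .ofReal (rexp (-2⁻¹ * log (c / (1 - c)).toReal * 2 ^ n)))

theorem ferniqueConst_lt_top {c : ℝ≥0∞} (hc : 2⁻¹ < c) (hc1 : c < 1) : ferniqueConst c < ∞ := by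
  have hc_compl : 0 < 1 - c := tsub_pos_of_lt hc1
  have hc_odds : 1 < (c / (1 - c)).toReal := by
    rw [← ENNReal.toReal_one, ENNReal.toReal_lt_toReal (by finiteness) (by finiteness),
      ENNReal.lt_div_iff_mul_lt (by simp) (by simp), one_mul]
    refine ENNReal.sub_lt_of_lt_add hc1.le ?_
    rw [← ENNReal.inv_two_add_inv_two]
    gcongr
  refine ENNReal.mul_lt_top ENNReal.ofReal_lt_top (ENNReal.add_lt_top.2 ⟨ENNReal.ofReal_lt_top, ?_⟩)
  refine (summable_exp_nat_mul_of_ge (mul_neg_of_neg_of_pos (by norm_num) (log_pos hc_odds))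
    fun i => ?_).tsum_ofReal_lt_top
  exact_mod_cast Nat.lt_two_pow_self.le

theorem lintegral_enorm_le_ferniqueConst_mul {E : Type*} [NormedAddCommGroup E] [NormedSpace ℝ E]
    [CompleteSpace E] [SecondCountableTopology E] [MeasurableSpace E] [BorelSpace E]
    {γ : Measure E} [IsGaussian γ] (hγ : γ[id] = 0) {c : ℝ≥0∞} (hc : 2⁻¹ < c) (hc1 : c < 1)
    {a : ℝ} (ha : 0 < a) (hca : c ≤ γ {x | ‖x‖ ≤ a}) :
    ∫⁻ x, ‖x‖ₑ ∂γ ≤ .ofReal a * ferniqueConst c := by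
  set r := Fernique.logRatio c
  have hr0 : 0 < √r := Real.sqrt_pos.2 (Fernique.logRatio_pos hc hc1)
  have hnorm : ∀ y : ℝ, y ≤ a * (√r)⁻¹ * rexp (r * a⁻¹ ^ 2 * y ^ 2) := fun y => by
    have hexp : √r * a⁻¹ * y ≤ rexp ((√r * a⁻¹ * y) ^ 2) :=
      (by nlinarith [sq_nonneg (√r * a⁻¹ * y - 1)] : _ ≤ (√r * a⁻¹ * y) ^ 2 + 1).trans
        (add_one_le_exp _)
    calc y = a * (√r)⁻¹ * (√r * a⁻¹ * y) := by field_simp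
      _ ≤ a * (√r)⁻¹ * rexp (r * a⁻¹ ^ 2 * y ^ 2) := by
          rw [mul_pow, mul_pow, Real.sq_sqrt (Real.sqrt_pos.1 hr0).le] at hexp
          gcongr
  calc ∫⁻ x, ‖x‖ₑ ∂γ
      ≤ ∫⁻ x, .ofReal (a * (√r)⁻¹) * .ofReal (rexp (r * a⁻¹ ^ 2 * ‖x‖ ^ 2)) ∂γ := by
        refine lintegral_mono fun x => ?_
        rw [← ofReal_norm, ← ENNReal.ofReal_mul (by positivity)]
        exact ENNReal.ofReal_le_ofReal (hnorm _)
    _ = .ofReal a * (.ofReal (√r)⁻¹ * ∫⁻ x, .ofReal (rexp (r * a⁻¹ ^ 2 * ‖x‖ ^ 2)) ∂γ) := by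
        rw [lintegral_const_mul _ (by fun_prop), ENNReal.ofReal_mul ha.le, mul_assoc]
    _ ≤ .ofReal a * ferniqueConst c := by
        unfold ferniqueConst
        gcongr
        exact lintegral_exp_mul_sq_norm_le_of_map_rotation_eq_self
          (IsGaussian.map_rotation_eq_self hγ _) hca hc

variable {Ω T : Type*} [MeasurableSpace Ω] {μ : Measure Ω} {X : T → Ω → ℝ}

theorem lintegral_enorm_restrict_le_ferniqueConst_mul (hX : IsGaussianProcess X μ)
    (hX0 : ∀ t, μ[X t] = 0) {c : ℝ≥0∞} (hc : 2⁻¹ < c) (hc1 : c < 1) {a : ℝ} (ha : 0 < a)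
    (hca : c ≤ μ {ω | ∀ t, |X t ω| ≤ a}) (I : Finset T) :
    ∫⁻ ω, ‖I.restrict (X · ω)‖ₑ ∂μ ≤ .ofReal a * ferniqueConst c := by
  have hI := hX.hasGaussianLaw I
  have := hI.isGaussian_map
  have hmean : (μ.map fun ω => I.restrict (X · ω))[id] = 0 := by
    rw [integral_map hI.aemeasurable aestronglyMeasurable_id]
    ext i
    simp only [id_eq]
    rw [eval_integral fun i => (hI.eval i).integrable]
    exact hX0 i
  rw [← lintegral_map' measurable_enorm.aemeasurable hI.aemeasurable]
  refine lintegral_enorm_le_ferniqueConst_mul hmean hc hc1 ha (hca.trans ?_)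
  rw [Measure.map_apply_of_aemeasurable hI.aemeasurable
    (measurableSet_le measurable_norm measurable_const)]
  exact measure_mono fun ω hω => (pi_norm_le_iff_of_nonneg ha.le).2 fun i => hω i

theorem exists_lt_measure_forall_abs_le [IsProbabilityMeasure μ]
    (hX : ∀ᵐ ω ∂μ, BddAbove (range fun t => |X t ω|)) {c : ℝ≥0∞} (hc : c < 1) :
    ∃ a > 0, c < μ {ω | ∀ t, |X t ω| ≤ a} := by
  have hmono : Monotone fun n : ℕ => {ω | ∀ t, |X t ω| ≤ n} := fun m n hmn ω hω t =>
    (hω t).trans (Nat.cast_le.2 hmn)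
  have hunion : μ (⋃ n : ℕ, {ω | ∀ t, |X t ω| ≤ n}) = 1 := by
    refine (measure_congr (eventuallyEq_univ.2 ?_)).trans measure_univ
    filter_upwards [hX] with ω ⟨b, hb⟩
    obtain ⟨n, hn⟩ := exists_nat_ge b
    exact mem_iUnion.2 ⟨n, fun t => (hb (mem_range_self t)).trans hn⟩
  have hlim := tendsto_measure_iUnion_atTop (μ := μ) hmono
  rw [hunion] at hlim
  obtain ⟨n, hn, hn0⟩ := ((hlim.eventually_const_lt hc).and (eventually_gt_atTop 0)).exists
  exact ⟨n, Nat.cast_pos.2 hn0, hn⟩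

theorem lintegral_iSup_enorm_lt_top [Countable T] (hX : IsGaussianProcess X μ)
    (hX0 : ∀ t, μ[X t] = 0) (hbdd : ∀ᵐ ω ∂μ, BddAbove (range fun t => |X t ω|)) :
    ∫⁻ ω, (⨆ t, ‖X t ω‖ₑ) ∂μ < ∞ := by
  have := hX.isProbabilityMeasure
  obtain ⟨c, hc, hc1⟩ := exists_between (ENNReal.inv_lt_one.2 ENNReal.one_lt_two)
  obtain ⟨a, ha, hca⟩ := exists_lt_measure_forall_abs_le hbdd hc1
  calc ∫⁻ ω, (⨆ t, ‖X t ω‖ₑ) ∂μ ≤ ∫⁻ ω, (⨆ I : Finset T, ‖I.restrict (X · ω)‖ₑ) ∂μ := by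
        refine lintegral_mono fun ω => iSup_le fun t => le_iSup_of_le {t} ?_
        exact enorm_le_iff_norm_le.2 <| norm_le_pi_norm (Finset.restrict {t} (X · ω))
          ⟨t, Finset.mem_singleton_self t⟩
    _ = ⨆ I : Finset T, ∫⁻ ω, ‖I.restrict (X · ω)‖ₑ ∂μ := by
        refine lintegral_iSup_directed (fun I => (hX.hasGaussianLaw I).aemeasurable.enorm)
          (Monotone.directed_le fun I J hIJ ω => ?_)
        refine enorm_le_iff_norm_le.2 <| (pi_norm_le_iff_of_nonneg (norm_nonneg _)).2 fun i => ?_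
        exact norm_le_pi_norm (J.restrict (X · ω)) ⟨i, hIJ i.2⟩
    _ ≤ .ofReal a * ferniqueConst c := iSup_le fun I =>
        lintegral_enorm_restrict_le_ferniqueConst_mul hX hX0 hc hc1 ha hca.le I
    _ < ∞ := ENNReal.mul_lt_top ENNReal.ofReal_lt_top (ferniqueConst_lt_top hc hc1)

theorem enorm_ciSup_le [Nonempty T] (x : T → ℝ) : ‖⨆ t, x t‖ₑ ≤ ⨆ t, ‖x t‖ₑ := by
  rcases eq_or_ne (⨆ t, ‖x t‖ₑ) ∞ with h | h
  · simp only [h, le_top]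
  · rw [← ofReal_norm]
    refine ENNReal.ofReal_le_of_le_toReal (abs_ciSup_le fun t => ?_)
    rw [← Real.norm_eq_abs, ← toReal_enorm]
    exact ENNReal.toReal_mono h (le_iSup (fun t => ‖x t‖ₑ) t)

theorem integrable_iSup_of_countable [Countable T] [Nonempty T] (hX : IsGaussianProcess X μ)
    (hX0 : ∀ t, μ[X t] = 0) (hbdd : ∀ᵐ ω ∂μ, BddAbove (range fun t => |X t ω|)) :
    Integrable (fun ω => ⨆ t, X t ω) μ :=
  ⟨(AEMeasurable.iSup hX.aemeasurable).aestronglyMeasurable,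
    (lintegral_mono fun _ => enorm_ciSup_le _).trans_lt (lintegral_iSup_enorm_lt_top hX hX0 hbdd)⟩

theorem integrable_iSup_of_compactSpace [TopologicalSpace T] [CompactSpace T]
    [TopologicalSpace.SeparableSpace T] [Nonempty T] (hX : IsGaussianProcess X μ)
    (hX0 : ∀ t, μ[X t] = 0) (hcont : ∀ᵐ ω ∂μ, Continuous (X · ω)) :
    Integrable (fun ω => ⨆ t, X t ω) μ := by
  obtain ⟨S, hS_countable, hS⟩ := TopologicalSpace.exists_countable_dense T
  have := hS_countable.to_subtype
  have := hS.nonempty.to_subtype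
  refine (integrable_iSup_of_countable (hX.restrict S) (fun s => hX0 s) ?_).congr ?_
  · filter_upwards [hcont] with ω hω
    refine (isCompact_range hω.abs).bddAbove.mono ?_
    exact range_comp_subset_range ((↑) : S → T) fun t => |X t ω|
  · filter_upwards [hcont] with ω hω using hS.ciSup' hω

end GaussianSupremum

section ThreePoints

theorem integral_abs_gaussianReal (v : NNReal) :
    ∫ x, |x| ∂(gaussianReal 0 v) = √(2 / π) * √v := by
  rcases eq_or_ne v 0 with rfl | hv
  · simp
  have hpdf : ∀ x : ℝ, gaussianPDFReal 0 v x • |x| =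
      (fun y : ℝ => (√(2 * π * v))⁻¹ *
        (y ^ (1 : ℝ) * rexp (-(2 * v : ℝ)⁻¹ * y ^ (2 : ℝ)))) |x| := fun x => by
    simp only [gaussianPDFReal, smul_eq_mul, rpow_one, rpow_two, sub_zero, sq_abs]
    rw [mul_comm (|x|), ← mul_assoc]
    congr 3
    field_simp
  have hsqrt : √(2 * π * v) * √(2 / π * v) = 2 * v := by
    rw [← Real.sqrt_mul (by positivity), show 2 * π * v * (2 / π * v) = (2 * (v : ℝ)) ^ 2 by
      field_simp]
    exact Real.sqrt_sq (by positivity)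
  rw [integral_gaussianReal_eq_integral_smul hv]
  simp_rw [hpdf]
  rw [integral_comp_abs (f := fun y : ℝ =>
      (√(2 * π * v))⁻¹ * (y ^ (1 : ℝ) * rexp (-(2 * v : ℝ)⁻¹ * y ^ (2 : ℝ)))), integral_const_mul,
    integral_rpow_mul_exp_neg_mul_rpow (by norm_num) (by norm_num) (by positivity),
    show -((1 : ℝ) + 1) / 2 = -1 by norm_num, show ((1 : ℝ) + 1) / 2 = 1 by norm_num,
    Real.Gamma_one, rpow_neg_one, inv_inv, ← Real.sqrt_mul (by positivity),
    ← mul_right_inj' (show √(2 * π * v) ≠ 0 by positivity), hsqrt]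
  field_simp

variable {Ω : Type*} [MeasurableSpace Ω] {μ : Measure Ω}

theorem integral_abs_of_hasGaussianLaw {Y : Ω → ℝ} (hY : HasGaussianLaw Y μ) (hY0 : μ[Y] = 0) :
    ∫ ω, |Y ω| ∂μ = √(2 / π) * √Var[Y; μ] := by
  rw [← integral_map hY.aemeasurable (f := fun x => |x|) (by fun_prop), hY.map_eq_gaussianReal,
    hY0, integral_abs_gaussianReal, Real.coe_toNNReal _ (variance_nonneg _ _)]

theorem ciSup_fin_three (x : Fin 3 → ℝ) : ⨆ i, x i = max (x 0) (max (x 1) (x 2)) := by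
  refine le_antisymm (ciSup_le fun i => ?_) ?_
  · fin_cases i <;> simp
  · have h := le_ciSup (Finite.bddAbove_range x)
    exact max_le (h 0) (max_le (h 1) (h 2))

theorem iSup_add_iSup_neg_fin_three (x : Fin 3 → ℝ) :
    (⨆ i, x i) + ⨆ i, -x i = (|x 0 - x 1| + |x 1 - x 2| + |x 0 - x 2|) / 2 := by
  rw [ciSup_fin_three, ciSup_fin_three]
  generalize x 0 = a
  generalize x 1 = b
  generalize x 2 = c
  simp only [max_def, abs_eq_max_neg]
  split_ifs <;> linarith

theorem integral_iSup_fin_three {X : Fin 3 → Ω → ℝ} (hX : HasGaussianLaw (fun ω => (X · ω)) μ)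
    (hX0 : ∀ i, μ[X i] = 0) :
    ∫ ω, (⨆ i, X i ω) ∂μ = √(2 / π) / 4 * (√Var[fun ω => X 0 ω - X 1 ω; μ] +
      √Var[fun ω => X 1 ω - X 2 ω; μ] + √Var[fun ω => X 0 ω - X 2 ω; μ]) := by
  have hsub : ∀ i j, HasGaussianLaw (fun ω => X i ω - X j ω) μ := fun i j =>
    hX.map_fun (ContinuousLinearMap.proj (R := ℝ) (φ := fun _ => ℝ) i - .proj j)
  have habs : ∀ i j, ∫ ω, |X i ω - X j ω| ∂μ = √(2 / π) * √Var[fun ω => X i ω - X j ω; μ] :=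
    fun i j => integral_abs_of_hasGaussianLaw (hsub i j) <| by
      rw [integral_sub (hX.eval i).integrable (hX.eval j).integrable, hX0, hX0, sub_zero]
  have hint : ∀ i j, Integrable (fun ω => |X i ω - X j ω|) μ := fun i j => (hsub i j).integrable.abs
  have hneg : Integrable (fun ω => ⨆ i, -X i ω) μ :=
    integrable_iSup_of_finite fun i => (hX.eval i).integrable.neg
  have hsum : ∫ ω, (⨆ i, X i ω) ∂μ + ∫ ω, (⨆ i, -X i ω) ∂μ =
      (∫ ω, |X 0 ω - X 1 ω| ∂μ + ∫ ω, |X 1 ω - X 2 ω| ∂μ + ∫ ω, |X 0 ω - X 2 ω| ∂μ) / 2 := by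
    rw [← integral_add (integrable_iSup_of_finite fun i => (hX.eval i).integrable) hneg]
    simp_rw [iSup_add_iSup_neg_fin_three]
    have h012 : Integrable (fun ω => |X 0 ω - X 1 ω| + |X 1 ω - X 2 ω|) μ :=
      (hint 0 1).add (hint 1 2)
    rw [integral_div, integral_add h012 (hint 0 2), integral_add (hint 0 1) (hint 1 2)]
  rw [integral_iSup_neg_of_hasGaussianLaw hX hX0, habs, habs, habs] at hsum
  linarith

end ThreePoints

namespace IsCenteredGaussianOn

variable {Ω : Type} [MeasurableSpace Ω] {μ : Measure Ω} {X : ℝ → Ω → ℝ} {S : Set ℝ}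

theorem exists_map_sum_eq_gaussianReal (hX : IsCenteredGaussianOn μ X S) {ι : Type*} [Fintype ι]
    (c : ι → ℝ) {t : ι → ℝ} (ht : ∀ i, t i ∈ S) :
    ∃ v : NNReal, μ.map (fun ω => ∑ i, c i * X (t i) ω) = gaussianReal 0 v := by
  let e := (Fintype.equivFin ι).symm
  simp_rw [← e.sum_comp]
  exact hX.2 _ (c ∘ e) (t ∘ e) fun i => ht _

theorem hasGaussianLaw (hX : IsCenteredGaussianOn μ X S) {ι : Type*} [Finite ι] {t : ι → ℝ}
    (ht : ∀ i, t i ∈ S) : HasGaussianLaw (fun ω i => X (t i) ω) μ := by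
  have := Fintype.ofFinite ι
  have hm : Measurable fun ω i => X (t i) ω := measurable_pi_lambda _ fun i => hX.1 _ (ht i)
  refine ⟨isGaussian_of_map_eq_gaussianReal fun L => ?_⟩
  obtain ⟨c, hc⟩ := exists_forall_apply_eq_sum_mul L
  obtain ⟨v, hv⟩ := hX.exists_map_sum_eq_gaussianReal c ht
  refine ⟨0, v, ?_⟩
  rw [Measure.map_map (by fun_prop) hm, ← hv]
  exact congrArg μ.map (funext fun ω => hc _)

theorem integral_eq_zero (hX : IsCenteredGaussianOn μ X S) {t : ℝ} (ht : t ∈ S) : μ[X t] = 0 := by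
  obtain ⟨v, hv⟩ := hX.exists_map_sum_eq_gaussianReal (ι := Unit) 1 fun _ => ht
  simp only [Finset.univ_unique, Finset.sum_singleton, Pi.one_apply, one_mul] at hv
  rw [← integral_map (f := fun x => x) (hX.1 t ht).aemeasurable (by fun_prop), hv,
    integral_id_gaussianReal]

theorem isGaussianProcess (hX : IsCenteredGaussianOn μ X S) :
    IsGaussianProcess (fun t : S => X t) μ :=
  ⟨fun _ => hX.hasGaussianLaw fun i => i.1.2⟩

theorem integrable_iSup_of_isCompact (hX : IsCenteredGaussianOn μ X S) {K : Set ℝ}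
    (hK : IsCompact K) (hK_nonempty : K.Nonempty) (hKS : K ⊆ S)
    (hcont : ∀ᵐ ω ∂μ, ContinuousOn (fun t => X t ω) K) :
    Integrable (fun ω => ⨆ t : K, X t ω) μ := by
  have := isCompact_iff_compactSpace.1 hK
  have := hK_nonempty.to_subtype
  refine integrable_iSup_of_compactSpace (hX.isGaussianProcess.comp_right (inclusion hKS))
    (fun t => hX.integral_eq_zero (hKS t.2)) ?_
  filter_upwards [hcont] with ω hω using hω.domRestrict

theorem integral_iSup_le_of_isCompact (hX : IsCenteredGaussianOn μ X S) {K : Set ℝ}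
    (hK : IsCompact K) (hKS : K ⊆ S) (hcont : ∀ᵐ ω ∂μ, ContinuousOn (fun t => X t ω) K)
    {ι : Type*} [Finite ι] [Nonempty ι] {t : ι → ℝ} (ht : ∀ i, t i ∈ K) :
    ∫ ω, (⨆ i, X (t i) ω) ∂μ ≤ ∫ ω, (⨆ s : K, X s ω) ∂μ := by
  have := Fintype.ofFinite ι
  have hK_nonempty : K.Nonempty := ‹Nonempty ι›.elim fun i => ⟨t i, ht i⟩
  refine integral_mono_ae (integrable_iSup_of_finite fun i =>
    ((hX.hasGaussianLaw fun i => hKS (ht i)).eval i).integrable)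
    (hX.integrable_iSup_of_isCompact hK hK_nonempty hKS hcont) ?_
  filter_upwards [hcont] with ω hω
  have hbdd : BddAbove (range fun s : K => X s ω) := by
    simpa only [image_eq_range] using (hK.image_of_continuousOn hω).bddAbove
  exact ciSup_le fun i => le_ciSup hbdd ⟨t i, ht i⟩

end IsCenteredGaussianOn

namespace IsFBM

variable {Ω : Type} [MeasurableSpace Ω] {μ : Measure Ω} {H : ℝ} {B : ℝ → Ω → ℝ}

theorem integral_iSup_le_expMax (hB : IsFBM μ H B) {ι : Type*} [Finite ι] [Nonempty ι] {t : ι → ℝ}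
    (ht : ∀ i, t i ∈ Icc (0 : ℝ) 1) : ∫ ω, (⨆ i, B (t i) ω) ∂μ ≤ expMax μ B := by
  refine hB.1.integral_iSup_le_of_isCompact isCompact_Icc Icc_subset_Ici_self ?_ ht
  filter_upwards [hB.2.1] with ω hω using hω.mono Icc_subset_Ici_self

theorem covariance_eq (hB : IsFBM μ H B) {s t : ℝ} (hs : 0 ≤ s) (ht : 0 ≤ t) :
    cov[B s, B t; μ] = (s ^ (2 * H) + t ^ (2 * H) - |t - s| ^ (2 * H)) / 2 := by
  have hs_law := (hB.1.hasGaussianLaw (ι := Unit) fun _ => hs).eval ()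
  have ht_law := (hB.1.hasGaussianLaw (ι := Unit) fun _ => ht).eval ()
  have := hs_law.isProbabilityMeasure
  rw [covariance_eq_sub hs_law.memLp_two ht_law.memLp_two, hB.1.integral_eq_zero hs, zero_mul,
    sub_zero]
  exact hB.2.2.2 s t hs ht

theorem variance_sum_const_mul_of_sum_eq_zero (hB : IsFBM μ H B) {ι : Type*} [Fintype ι]
    {t : ι → ℝ} (ht : ∀ i, 0 ≤ t i) {c : ι → ℝ} (hc : ∑ i, c i = 0) :
    Var[fun ω => ∑ i, c i * B (t i) ω; μ] =
      -(∑ i, ∑ j, c i * c j * |t i - t j| ^ (2 * H)) / 2 := by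
  have hlaw := hB.1.hasGaussianLaw ht
  have := hlaw.isProbabilityMeasure
  have hcov : ∀ i j, c i * c j * cov[B (t i), B (t j); μ] =
      c i * t i ^ (2 * H) / 2 * c j + c i * (c j * t j ^ (2 * H) / 2) -
        c i * c j * |t i - t j| ^ (2 * H) / 2 := fun i j => by
    rw [hB.covariance_eq (ht i) (ht j), abs_sub_comm]
    ring
  rw [variance_sum_const_mul fun i => (hlaw.eval i).memLp_two]
  simp_rw [hcov, Finset.sum_sub_distrib, Finset.sum_add_distrib, ← Finset.mul_sum,
    ← Finset.sum_mul, ← Finset.sum_div, hc]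
  ring

theorem variance_sub (hB : IsFBM μ H B) (hH : H ≠ 0) {s t : ℝ} (hs : 0 ≤ s) (ht : 0 ≤ t) :
    Var[fun ω => B s ω - B t ω; μ] = |s - t| ^ (2 * H) := by
  have h := hB.variance_sum_const_mul_of_sum_eq_zero (t := ![s, t]) (c := ![1, -1])
    (fun i => by fin_cases i <;> simp [hs, ht]) (by simp)
  have h0 : (0 : ℝ) ^ (2 * H) = 0 := zero_rpow (by simpa)
  simpa [Fin.sum_univ_two, h0, abs_sub_comm t s, ← sub_eq_add_neg] using h

end IsFBM

section Numerics

theorem mul_sqrt_le_integral_iSup_pi_gaussianReal {s : ℝ} (hs : 7 ≤ s) :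
    √(6 / 7 * s) * 0.98 ≤
      ∫ x, (⨆ i, x i) ∂(Measure.pi fun _ : Fin (⌊rexp s⌋₊ + 1) => gaussianReal 0 1) := by
  have hexp_one : (2.7 : ℝ) ≤ rexp 1 := by linarith [exp_one_gt_d9]
  have hexp : ∀ k : ℕ, (2.7 : ℝ) ^ k ≤ rexp k := fun k => by
    rw [← exp_one_pow]
    gcongr
  have hfloor : 7 / 8 * rexp s ≤ ⌊rexp s⌋₊ := by
    have : (2.7 : ℝ) ^ 3 ≤ rexp s := (hexp 3).trans (exp_le_exp.2 (by push_cast; linarith))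
    linarith [Nat.lt_floor_add_one (rexp s)]
  have hcount :
      4 ≤ ⌊rexp s⌋₊ * (√(1 - (4 / 3)⁻¹) / 2 * rexp (-(4 / 3 * √(6 / 7 * s) ^ 2 / 2))) := by
    rw [Real.sq_sqrt (by positivity), show 1 - (4 / 3 : ℝ)⁻¹ = (1 / 2) ^ 2 by norm_num,
      Real.sqrt_sq (by norm_num)]
    calc (4 : ℝ) ≤ 7 / 8 * (1 / 2 / 2 * rexp (3 : ℕ)) := by linarith [hexp 3]
      _ ≤ 7 / 8 * (1 / 2 / 2 * rexp (s + -(4 / 3 * (6 / 7 * s) / 2))) := by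
          gcongr
          norm_num
          linarith
      _ = 7 / 8 * rexp s * (1 / 2 / 2 * rexp (-(4 / 3 * (6 / 7 * s) / 2))) := by
          rw [Real.exp_add]
          ring
      _ ≤ _ := by gcongr
  refine le_trans ?_ (mul_one_sub_exp_le_integral_iSup_pi_gaussianReal _
    (by norm_num : (1 : ℝ) < 4 / 3) (Real.sqrt_nonneg (6 / 7 * s)))
  gcongr
  calc (0.98 : ℝ) ≤ 1 - (rexp (4 : ℕ))⁻¹ := by
        have := inv_anti₀ (by positivity) (hexp 4)
        norm_num at this ⊢
        linarith
    _ ≤ _ := by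
        rw [← Real.exp_neg]
        gcongr
        exact_mod_cast hcount

theorem one_div_lt_sqrt_two_div_pi_mul {H : ℝ} (hH : 1 / 7 ≤ H) (hH1 : H ≤ 1) :
    1 / (5 * √H) < √(2 / π) / 4 * (2 * (1 / 2) ^ H + 1) := by
  have hpow : 1 - 0.7 * H ≤ (1 / 2 : ℝ) ^ H := by
    rw [Real.rpow_def_of_pos (by norm_num), one_div, Real.log_inv]
    nlinarith [Real.add_one_le_exp (-Real.log 2 * H), Real.log_two_lt_d9]
  have hπ : 0.7978 ≤ √(2 / π) := by
    refine Real.le_sqrt_of_sq_le ?_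
    rw [le_div_iff₀ Real.pi_pos]
    nlinarith [Real.pi_lt_d6]
  have hs1 : √H ≤ 1 := Real.sqrt_le_one.2 hH1
  have hs0 : 0.377 ≤ √H := Real.le_sqrt_of_sq_le (by norm_num; linarith)
  rw [div_lt_iff₀ (by positivity)]
  calc 1 < 0.7978 / 4 * (3 - 1.4 * √H ^ 2) * (5 * √H) := by
        nlinarith [mul_nonneg (mul_nonneg (sub_nonneg.2 hs0) (sub_nonneg.2 hs1)) (sqrt_nonneg H),
          mul_nonneg (sub_nonneg.2 hs0) (sub_nonneg.2 hs1)]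
    _ ≤ √(2 / π) / 4 * (2 * (1 / 2) ^ H + 1) * (5 * √H) := by
        rw [Real.sq_sqrt (by linarith)]
        gcongr <;> linarith

theorem le_two_sub_two_rpow_div_floor_exp_rpow {H : ℝ} (hH : 0 < H) (hH7 : H ≤ 1 / 7) :
    0.39 / 7.39 ≤ (2 - 2 ^ (2 * H)) / 2 / (⌊rexp (1 / H)⌋₊ : ℝ) ^ (2 * H) := by
  have hfloor_pos : (0 : ℝ) < ⌊rexp (1 / H)⌋₊ :=
    Nat.cast_pos.2 (Nat.floor_pos.2 (one_le_exp (by positivity)))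
  have htwo : (2 : ℝ) ^ (2 * H) ≤ 1.22 := by
    calc (2 : ℝ) ^ (2 * H) ≤ 2 ^ (2 / 7 : ℝ) :=
          rpow_le_rpow_of_exponent_le one_le_two (by linarith)
      _ ≤ 1.22 := by
          refine le_of_pow_le_pow_left₀ (n := 7) (by norm_num) (by norm_num) ?_
          rw [← rpow_mul_natCast (by norm_num)]
          norm_num
  have hfloor : (⌊rexp (1 / H)⌋₊ : ℝ) ^ (2 * H) ≤ 7.39 := by
    calc (⌊rexp (1 / H)⌋₊ : ℝ) ^ (2 * H) ≤ rexp (1 / H) ^ (2 * H) := by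
          gcongr
          exact Nat.floor_le (exp_pos _).le
      _ = rexp 1 ^ 2 := by
          rw [← exp_mul, ← exp_nat_mul]
          congr 1
          field_simp
          norm_num
      _ ≤ 2.7183 ^ 2 := by
          gcongr
          linarith [exp_one_lt_d9]
      _ ≤ 7.39 := by norm_num
  gcongr
  all_goals linarith

theorem one_div_lt_sqrt_mul_sqrt {H : ℝ} (hH : 0 < H) :
    1 / (5 * √H) < √(0.39 / 7.39) * (√(6 / 7 * (1 / H)) * 0.98) := by
  rw [← mul_assoc, ← Real.sqrt_mul (by norm_num), ← div_lt_iff₀ (by norm_num),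
    Real.lt_sqrt (by positivity), div_pow, div_pow, mul_pow, Real.sq_sqrt hH.le]
  field_simp
  norm_num

theorem tendsto_one_div_mul_sqrt_nhdsGT_zero :
    Tendsto (fun x : ℝ => 1 / (5 * √x)) (𝓝[>] 0) atTop := by
  simp_rw [one_div]
  refine tendsto_inv_nhdsGT_zero.comp (tendsto_nhdsWithin_iff.2 ⟨?_, ?_⟩)
  · have h : ContinuousAt (fun x : ℝ => 5 * √x) 0 := by fun_prop
    simpa [ContinuousAt] using h.tendsto.mono_left nhdsWithin_le_nhds
  · filter_upwards [self_mem_nhdsWithin] with x hx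
    have : 0 < √x := Real.sqrt_pos.2 hx
    exact mem_Ioi.2 (by positivity)

end Numerics

namespace IsFBM

variable {Ω : Type} [MeasurableSpace Ω] {μ : Measure Ω} {H : ℝ} {B : ℝ → Ω → ℝ}

theorem sqrt_two_div_pi_mul_le_expMax (hB : IsFBM μ H B) (hH : H ≠ 0) :
    √(2 / π) / 4 * (2 * (1 / 2) ^ H + 1) ≤ expMax μ B := by
  have ht : ∀ i, ![(0 : ℝ), 1 / 2, 1] i ∈ Icc (0 : ℝ) 1 := fun i => by
    fin_cases i <;> constructor <;> norm_num
  have hsqrt : ∀ x : ℝ, 0 ≤ x → √(x ^ (2 * H)) = x ^ H := fun x hx => by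
    rw [mul_comm, rpow_mul hx, rpow_two, Real.sqrt_sq (by positivity)]
  refine le_trans (le_of_eq ?_) (hB.integral_iSup_le_expMax ht)
  rw [integral_iSup_fin_three (hB.1.hasGaussianLaw fun i => (ht i).1)
    fun i => hB.1.integral_eq_zero (ht i).1]
  simp only [Matrix.cons_val]
  rw [hB.variance_sub hH le_rfl (by norm_num), hB.variance_sub hH (by norm_num) zero_le_one,
    hB.variance_sub hH le_rfl zero_le_one, hsqrt _ (abs_nonneg _), hsqrt _ (abs_nonneg _),
    hsqrt _ (abs_nonneg _), show |(0 : ℝ) - 1 / 2| = 1 / 2 by norm_num [abs_of_pos],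
    show |(1 / 2 : ℝ) - 1| = 1 / 2 by norm_num [abs_of_pos], show |(0 : ℝ) - 1| = 1 by norm_num,
    one_rpow]
  ring

theorem mul_sum_sq_le_variance_sum_grid (hB : IsFBM μ H B) (hH : 0 < H) (hH1 : 2 * H ≤ 1) {n : ℕ}
    (hn : 0 < n) {c : Fin (n + 1) → ℝ} (hc : ∑ i, c i = 0) :
    (2 - 2 ^ (2 * H)) / 2 / (n : ℝ) ^ (2 * H) * ∑ i, c i ^ 2 ≤
      Var[fun ω => ∑ i, c i * B ((i : ℕ) / n) ω; μ] := by
  have hn' : (0 : ℝ) < n := Nat.cast_pos.2 hn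
  have hscale : ∀ i j : Fin (n + 1),
      c i * c j * |((i : ℕ) : ℝ) / n - ((j : ℕ) : ℝ) / n| ^ (2 * H) =
        c i * c j * |(((i : ℕ) : ℤ) : ℝ) - (((j : ℕ) : ℤ) : ℝ)| ^ (2 * H) / n ^ (2 * H) :=
    fun i j => by
      rw [← sub_div, abs_div, abs_of_pos hn', div_rpow (abs_nonneg _) hn'.le, mul_div_assoc]
      simp only [Int.cast_natCast]
  rw [hB.variance_sum_const_mul_of_sum_eq_zero (fun i => by positivity) hc]
  simp_rw [hscale, ← Finset.sum_div]
  have hneg := sum_sum_mul_rpow_abs_sub_le (f := fun i : Fin (n + 1) => ((i : ℕ) : ℤ))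
    (Nat.cast_injective.comp Fin.val_injective) (by positivity) hH1 hc
  calc _ = (2 - 2 ^ (2 * H)) * (∑ i, c i ^ 2) / n ^ (2 * H) / 2 := by ring
    _ ≤ _ := by
        rw [← neg_div]
        gcongr
        linarith

theorem mul_integral_iSup_pi_gaussianReal_le_expMax (hB : IsFBM μ H B) (hH : 0 < H)
    (hH1 : 2 * H ≤ 1) {n : ℕ} (hn : 0 < n) :
    √((2 - 2 ^ (2 * H)) / 2 / (n : ℝ) ^ (2 * H)) *
      ∫ x, (⨆ i, x i) ∂(Measure.pi fun _ : Fin (n + 1) => gaussianReal 0 1) ≤ expMax μ B := by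
  have ht : ∀ i : Fin (n + 1), ((i : ℕ) : ℝ) / n ∈ Icc (0 : ℝ) 1 := fun i =>
    ⟨by positivity, div_le_one_of_le₀ (Nat.cast_le.2 (Nat.le_of_lt_succ i.2)) n.cast_nonneg⟩
  have htwo : (2 : ℝ) ^ (2 * H) ≤ 2 := by
    simpa using rpow_le_rpow_of_exponent_le one_le_two hH1
  refine le_trans (mul_integral_iSup_pi_gaussianReal_le (hB.1.hasGaussianLaw fun i => (ht i).1)
    (fun i => hB.1.integral_eq_zero (ht i).1) (sqrt_nonneg _) fun c hc => ?_)
    (hB.integral_iSup_le_expMax ht)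
  rw [Real.sq_sqrt (div_nonneg (by linarith) (by positivity))]
  exact hB.mul_sum_sq_le_variance_sum_grid hH hH1 hn hc

theorem lt_expMax_of_le (hB : IsFBM μ H B) (hH : 0 < H) (hH7 : H ≤ 1 / 7) :
    1 / (5 * √H) < expMax μ B := by
  have hn : 0 < ⌊rexp (1 / H)⌋₊ := Nat.floor_pos.2 (one_le_exp (by positivity))
  have hmax := mul_sqrt_le_integral_iSup_pi_gaussianReal (s := 1 / H)
    (by rwa [le_div_iff₀ hH, ← le_div_iff₀' (by norm_num)])
  calc 1 / (5 * √H) < √(0.39 / 7.39) * (√(6 / 7 * (1 / H)) * 0.98) :=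
        one_div_lt_sqrt_mul_sqrt hH
    _ ≤ √((2 - 2 ^ (2 * H)) / 2 / (⌊rexp (1 / H)⌋₊ : ℝ) ^ (2 * H)) *
          ∫ x, (⨆ i, x i) ∂(Measure.pi fun _ : Fin (⌊rexp (1 / H)⌋₊ + 1) => gaussianReal 0 1) :=
        mul_le_mul (sqrt_le_sqrt (le_two_sub_two_rpow_div_floor_exp_rpow hH hH7)) hmax
          (by positivity) (sqrt_nonneg _)
    _ ≤ expMax μ B := hB.mul_integral_iSup_pi_gaussianReal_le_expMax hH (by linarith) hn

theorem lt_expMax (hB : IsFBM μ H B) (hH : H ∈ Ioo (0 : ℝ) 1) : 1 / (5 * √H) < expMax μ B := by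
  rcases le_total H (1 / 7) with h | h
  · exact hB.lt_expMax_of_le hH.1 h
  · exact (one_div_lt_sqrt_two_div_pi_mul h hH.2.le).trans_le
      (hB.sqrt_two_div_pi_mul_le_expMax hH.1.ne')

end IsFBM

/-- `f(H) > 1/(5√H)` for every `H ∈ (0,1)`; consequently `f(H) → ∞`
as `H → 0⁺`. -/
theorem stmt14 {Ω : Type} [MeasurableSpace Ω] (μ : Measure Ω) [IsProbabilityMeasure μ]
    (B : ℝ → ℝ → Ω → ℝ) (hB : ∀ H ∈ Ioo (0:ℝ) 1, IsFBM μ H (B H)) :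
    (∀ H ∈ Ioo (0:ℝ) 1, 1 / (5 * Real.sqrt H) < expMax μ (B H)) ∧
      Tendsto (fun H => expMax μ (B H)) (𝓝[>] (0:ℝ)) atTop := by
  have h : ∀ H ∈ Ioo (0 : ℝ) 1, 1 / (5 * √H) < expMax μ (B H) := fun H hH => (hB H hH).lt_expMax hH
  refine ⟨h, tendsto_atTop_mono' _ ?_ tendsto_one_div_mul_sqrt_nhdsGT_zero⟩
  filter_upwards [Ioo_mem_nhdsGT zero_lt_one] with H hH using (h H hH).le
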